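/- Let Ξ be a measurable space, X a nonempty set, and f : X × Ξ → ℝ such that for every x ∈ X the function f(x,·) is integrable with respect to every probability measure on Ξ. Define the pseudometric 𝕕(P₁,P₂) := sup_{x∈X} |∫ f(x,·) dP₁ − ∫ f(x,·) dP₂| and assume Δ := sup over all pairs of probability measures (P₁,P₂) of 𝕕(P₁,P₂) is finite. Let d be a real-valued function on pairs of probability measures on Ξ satisfying: d ≥ 0; d(P,P) = 0 for every P; d(P₁,P₂) = d(P₂,P₁); d(P₁,P₂) ≤ d(P₁,P₃) + d(P₃,P₂); and convexity in the first argument, d((1−α)·P₁ + α·P₃, P₂) ≤ (1−α)·d(P₁,P₂) + α·d(P₃,P₂) for all α ∈ [0,1]. Fix probability measures P̂ and P* on Ξ and r > 0, and set 𝒫_N := {P : d(P, P̂) ≤ r} and 𝒫̂ := {P : d(P, P*) ≤ r}. Then ℍ(𝒫_N, 𝒫̂) ≤ (Δ/r)·d(P̂, P*). -/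

import Mathlib

open MeasureTheory

/-- The mixture `(1-α)·P + α·Q` of two measures. -/
noncomputable def mix {Ξ : Type*} [MeasurableSpace Ξ] (α : ℝ) (P Q : Measure Ξ) : Measure Ξ :=
  ENNReal.ofReal (1 - α) • P + ENNReal.ofReal α • Q

/-- The pseudometric `𝕕(P₁,P₂) = sup_{x ∈ X} |∫ f(x,·) dP₁ − ∫ f(x,·) dP₂|`. -/
noncomputable def pseudoDist {Ξ X : Type*} [MeasurableSpace Ξ] (f : X → Ξ → ℝ)
    (P₁ P₂ : Measure Ξ) : ℝ :=
  ⨆ x : X, |(∫ ξ, f x ξ ∂P₁) - ∫ ξ, f x ξ ∂P₂|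

/-- The Hausdorff distance `ℍ(𝒫₁,𝒫₂)` between two sets of measures under `pseudoDist`. -/
noncomputable def hausdorffDistSets {Ξ X : Type*} [MeasurableSpace Ξ] (f : X → Ξ → ℝ)
    (𝒜₁ 𝒜₂ : Set (Measure Ξ)) : ℝ :=
  max (⨆ Q : 𝒜₁, ⨅ P : 𝒜₂, pseudoDist f (Q : Measure Ξ) (P : Measure Ξ))
      (⨆ Q : 𝒜₂, ⨅ P : 𝒜₁, pseudoDist f (Q : Measure Ξ) (P : Measure Ξ))

theorem mix_isProb {Ξ : Type*} [MeasurableSpace Ξ] (α : ℝ) (h0 : 0 ≤ α) (h1 : α ≤ 1)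
    (P Q : Measure Ξ) [IsProbabilityMeasure P] [IsProbabilityMeasure Q] :
    IsProbabilityMeasure (mix α P Q) := by
  constructor
  simp only [mix, Measure.add_apply, Measure.smul_apply, measure_univ, smul_eq_mul, mul_one]
  rw [← ENNReal.ofReal_add (by linarith) h0]
  simp

theorem pseudoDist_nonneg' {Ξ X : Type*} [MeasurableSpace Ξ] (f : X → Ξ → ℝ)
    (P Q : Measure Ξ) : 0 ≤ pseudoDist f P Q :=
  Real.iSup_nonneg fun _ => abs_nonneg _

theorem pseudoDist_mix {Ξ X : Type*} [MeasurableSpace Ξ] (f : X → Ξ → ℝ)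
    (α : ℝ) (h0 : 0 ≤ α) (h1 : α ≤ 1) (P Q : Measure Ξ)
    (hP : ∀ x, Integrable (f x) P) (hQ : ∀ x, Integrable (f x) Q) :
    pseudoDist f P (mix α P Q) = α * pseudoDist f P Q := by
  unfold pseudoDist
  rw [Real.mul_iSup_of_nonneg h0]
  congr 1
  funext x
  unfold mix
  rw [integral_add_measure ((hP x).smul_measure ENNReal.ofReal_ne_top)
    ((hQ x).smul_measure ENNReal.ofReal_ne_top), integral_smul_measure, integral_smul_measure,
    ENNReal.toReal_ofReal h0, ENNReal.toReal_ofReal (by linarith)]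
  nth_rewrite 3 [← abs_of_nonneg h0]
  rw [← abs_mul]
  congr 1
  simp only [smul_eq_mul]
  ring

theorem one_sided
    {Ξ X : Type*} [MeasurableSpace Ξ]
    (f : X → Ξ → ℝ)
    (hint : ∀ x, ∀ P : Measure Ξ, IsProbabilityMeasure P → Integrable (f x) P)
    (Δ : ℝ) (hΔ0 : 0 ≤ Δ)
    (hΔ : ∀ P Q : Measure Ξ, IsProbabilityMeasure P → IsProbabilityMeasure Q →
      pseudoDist f P Q ≤ Δ)
    (d : Measure Ξ → Measure Ξ → ℝ)
    (hd_nonneg : ∀ P Q : Measure Ξ, IsProbabilityMeasure P → IsProbabilityMeasure Q →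
      0 ≤ d P Q)
    (hd_refl : ∀ P : Measure Ξ, IsProbabilityMeasure P → d P P = 0)
    (hd_tri : ∀ P Q R : Measure Ξ, IsProbabilityMeasure P → IsProbabilityMeasure Q →
      IsProbabilityMeasure R → d P Q ≤ d P R + d R Q)
    (hd_conv : ∀ α ∈ Set.Icc (0:ℝ) 1, ∀ P₁ P₃ P₂ : Measure Ξ,
      IsProbabilityMeasure P₁ → IsProbabilityMeasure P₃ → IsProbabilityMeasure P₂ →
      d (mix α P₁ P₃) P₂ ≤ (1 - α) * d P₁ P₂ + α * d P₃ P₂)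
    (A B : Measure Ξ) (hA : IsProbabilityMeasure A) (hB : IsProbabilityMeasure B)
    (r : ℝ) (hr : 0 < r) :
    (⨆ Q : {P | IsProbabilityMeasure P ∧ d P A ≤ r},
      ⨅ P : {P | IsProbabilityMeasure P ∧ d P B ≤ r},
        pseudoDist f (Q : Measure Ξ) (P : Measure Ξ)) ≤ (Δ / r) * d A B := by
  have hδ := hd_nonneg A B hA hB
  refine Real.iSup_le ?_ (by positivity)
  rintro ⟨Q, hQ, hQr⟩
  set δ := d A B with hδdef
  have hpos : 0 < r + δ := by linarith
  have h0 : 0 ≤ δ / (r + δ) := by positivity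
  have h1 : δ / (r + δ) ≤ 1 := by rw [div_le_one hpos]; linarith
  have hm := mix_isProb (δ / (r + δ)) h0 h1 Q B
  have hc := hd_conv _ ⟨h0, h1⟩ Q B B hQ hB hB
  rw [hd_refl B hB] at hc
  have ht := hd_tri Q B A hQ hB hA
  have hmem : d (mix (δ / (r + δ)) Q B) B ≤ r := by
    have e : (1 - δ / (r + δ)) * (r + δ) = r := by field_simp; ring
    have := mul_le_mul_of_nonneg_left (show d Q B ≤ r + δ by linarith) (sub_nonneg.2 h1)
    linarith
  refine (ciInf_le ⟨0, ?_⟩ ⟨mix (δ / (r + δ)) Q B, hm, hmem⟩).trans ?_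
  · rintro _ ⟨P, rfl⟩
    exact pseudoDist_nonneg' f _ _
  · change pseudoDist f Q (mix (δ / (r + δ)) Q B) ≤ _
    rw [pseudoDist_mix f _ h0 h1 Q B (fun x => hint x Q hQ) (fun x => hint x B hB)]
    calc δ / (r + δ) * pseudoDist f Q B ≤ δ / r * Δ := by
          apply mul_le_mul _ (hΔ Q B hQ hB) (pseudoDist_nonneg' f _ _) (by positivity)
          exact div_le_div_of_nonneg_left hδ hr (by linarith)
      _ = Δ / r * δ := by ring

/-- Hoffman-type lemma for distance-based ambiguity sets:
`ℍ(𝒫_N, 𝒫̂) ≤ (Δ/r)·d(P̂, P*)`. -/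
theorem distance_ambiguity_hausdorff_bound
    {Ξ X : Type*} [MeasurableSpace Ξ] [Nonempty X]
    (f : X → Ξ → ℝ)
    (hint : ∀ x, ∀ P : Measure Ξ, IsProbabilityMeasure P → Integrable (f x) P)
    (Δ : ℝ)
    (hΔbdd : BddAbove {r | ∃ P₁ P₂ : Measure Ξ,
      IsProbabilityMeasure P₁ ∧ IsProbabilityMeasure P₂ ∧ r = pseudoDist f P₁ P₂})
    (hΔ : Δ = sSup {r | ∃ P₁ P₂ : Measure Ξ,
      IsProbabilityMeasure P₁ ∧ IsProbabilityMeasure P₂ ∧ r = pseudoDist f P₁ P₂})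
    (d : Measure Ξ → Measure Ξ → ℝ)
    (hd_nonneg : ∀ P Q : Measure Ξ, IsProbabilityMeasure P → IsProbabilityMeasure Q →
      0 ≤ d P Q)
    (hd_refl : ∀ P : Measure Ξ, IsProbabilityMeasure P → d P P = 0)
    (hd_symm : ∀ P Q : Measure Ξ, IsProbabilityMeasure P → IsProbabilityMeasure Q →
      d P Q = d Q P)
    (hd_tri : ∀ P Q R : Measure Ξ, IsProbabilityMeasure P → IsProbabilityMeasure Q →
      IsProbabilityMeasure R → d P Q ≤ d P R + d R Q)
    (hd_conv : ∀ α ∈ Set.Icc (0:ℝ) 1, ∀ P₁ P₃ P₂ : Measure Ξ,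
      IsProbabilityMeasure P₁ → IsProbabilityMeasure P₃ → IsProbabilityMeasure P₂ →
      d (mix α P₁ P₃) P₂ ≤ (1 - α) * d P₁ P₂ + α * d P₃ P₂)
    (Phat Pstar : Measure Ξ) [IsProbabilityMeasure Phat] [IsProbabilityMeasure Pstar]
    (r : ℝ) (hr : 0 < r) :
    hausdorffDistSets f {P | IsProbabilityMeasure P ∧ d P Phat ≤ r}
        {P | IsProbabilityMeasure P ∧ d P Pstar ≤ r} ≤
      (Δ / r) * d Phat Pstar := by
  have hle : ∀ P Q : Measure Ξ, IsProbabilityMeasure P → IsProbabilityMeasure Q →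
      pseudoDist f P Q ≤ Δ := fun P Q hP hQ => by
    rw [hΔ]
    exact le_csSup hΔbdd ⟨P, Q, hP, hQ, rfl⟩
  have hΔ0 : 0 ≤ Δ :=
    (pseudoDist_nonneg' f Phat Phat).trans (hle _ _ inferInstance inferInstance)
  unfold hausdorffDistSets
  refine max_le ?_ ?_
  · exact one_sided f hint Δ hΔ0 hle d hd_nonneg hd_refl hd_tri hd_conv Phat Pstar
      inferInstance inferInstance r hr
  · rw [hd_symm Phat Pstar inferInstance inferInstance]
    exact one_sided f hint Δ hΔ0 hle d hd_nonneg hd_refl hd_tri hd_conv Pstar Phat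
      inferInstance inferInstance r hr
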